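/- Assume that for all i = 1,…,n one has f̲_i^0 ∈ (0,∞), that f_i(t,0) = 0 for all t ∈ [0,1] and all i = 2,…,n, and that the positive exponents satisfy α_1·α_2·⋯·α_n < k_1·k_2·⋯·k_n. Then there exists a constant r > 0 such that every v ∈ K with ‖v‖ = r satisfies ‖T(v)‖ > ‖v‖. -/

import Mathlib

/-!
The leading behaviour of `T_i` on small functions is a power law: if `v` is small and `v ≥ m` on
`[1/4, 3/4]`, then `f_i(s, v(s)) ≥ L m ^ α_i` there, and integrating over `s ∈ [1/4, 3/4]` and
`τ ∈ [3/4, 1]` gives `T_i v ≥ D m ^ (α_i / k_i)` on `[1/4, 3/4]` (`thess_lower`). Because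
`f_i(t, 0) = 0` for `i ≥ 2`, the operators `T_2, …, T_n` send small functions to small functions
(`thess_small`), so these bounds can be chained (`compT_bounds`), while `T_1`, which is applied
last, needs no smallness of its output. Altogether `T v ≥ D (r / 4) ^ β` on `[1/4, 3/4]` for
`v ∈ K` with `‖v‖ = r` small, where `β = ∏ α_i / k_i < 1`; a sublinear power beats `r` near `0`.

The lower bound is propagated as a bound on `[1/4, 3/4]` alone, so the invariance of the cone `K`
under the `T_i` is not needed, only continuity and nonnegativity.
-/


open Set Filter MeasureTheory

/-- Supremum norm on `C([0,1])` (applied to a real function, using only its values on `[0,1]`). -/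
noncomputable def supNorm (v : ℝ → ℝ) : ℝ :=
  sSup ((fun t => |v t|) '' Icc (0:ℝ) 1)

/-- The cone `K = {v ∈ C([0,1]) : v ≥ 0 on [0,1], min_{1/4 ≤ t ≤ 3/4} v(t) ≥ ‖v‖/4}`. -/
def inK (v : ℝ → ℝ) : Prop :=
  ContinuousOn v (Icc (0:ℝ) 1) ∧ (∀ t ∈ Icc (0:ℝ) 1, 0 ≤ v t) ∧
    ∀ t ∈ Icc (1/4 : ℝ) (3/4 : ℝ), supNorm v / 4 ≤ v t

/-- The operator `T_{k,f}`:
`T_{k,f}(v)(t) = ∫_t^1 ((k/τ^{N-k}) ∫_0^τ (s^{N-1}/C(N-1,k-1)) f(s, v(s)) ds)^{1/k} dτ`. -/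
noncomputable def Thess (N k : ℕ) (f : ℝ → ℝ → ℝ) (v : ℝ → ℝ) : ℝ → ℝ := fun t =>
  ∫ τ in t..1, (((k : ℝ) / τ ^ (N - k)) *
      ∫ s in (0:ℝ)..τ, s ^ (N - 1) / ((N - 1).choose (k - 1)) * f s (v s)) ^ ((1 : ℝ) / (k : ℝ))

/-- `Γ_k = ∫_{1/4}^{3/4} ((k/τ^{N-k}) ∫_{1/4}^τ (s^{N-1}/C(N-1,k-1)) ds)^{1/k} dτ`. -/
noncomputable def Gam (N k : ℕ) : ℝ :=
  ∫ τ in (1/4 : ℝ)..(3/4 : ℝ), (((k : ℝ) / τ ^ (N - k)) *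
      ∫ s in (1/4 : ℝ)..τ, s ^ (N - 1) / ((N - 1).choose (k - 1))) ^ ((1 : ℝ) / (k : ℝ))

/-- The composite operator `T = T_1 ∘ T_2 ∘ ⋯ ∘ T_n`. -/
noncomputable def compT (N : ℕ) {n : ℕ} (k : Fin n → ℕ) (f : Fin n → ℝ → ℝ → ℝ) :
    (ℝ → ℝ) → (ℝ → ℝ) :=
  (List.ofFn fun i : Fin n => Thess N (k i) (f i)).foldr (· ∘ ·) id

/-- `liminf_{c→0⁺} min_{0≤t≤1} f(t,c)/c^a`, as an extended real number. -/
noncomputable def fLow0 (f : ℝ → ℝ → ℝ) (a : ℝ) : EReal :=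
  Filter.liminf
    (fun c : ℝ => ((sInf ((fun t => f t c / c ^ a) '' Icc (0:ℝ) 1) : ℝ) : EReal))
    (nhdsWithin 0 (Ioi 0))

/-- `limsup_{c→0⁺} max_{0≤t≤1} f(t,c)/c^a`, as an extended real number. -/
noncomputable def fUp0 (f : ℝ → ℝ → ℝ) (a : ℝ) : EReal :=
  Filter.limsup
    (fun c : ℝ => ((sSup ((fun t => f t c / c ^ a) '' Icc (0:ℝ) 1) : ℝ) : EReal))
    (nhdsWithin 0 (Ioi 0))

/-- `liminf_{c→∞} min_{0≤t≤1} f(t,c)/c^b`, as an extended real number. -/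
noncomputable def fLowInf (f : ℝ → ℝ → ℝ) (b : ℝ) : EReal :=
  Filter.liminf
    (fun c : ℝ => ((sInf ((fun t => f t c / c ^ b) '' Icc (0:ℝ) 1) : ℝ) : EReal))
    Filter.atTop

/-- `limsup_{c→∞} max_{0≤t≤1} f(t,c)/c^b`, as an extended real number. -/
noncomputable def fUpInf (f : ℝ → ℝ → ℝ) (b : ℝ) : EReal :=
  Filter.limsup
    (fun c : ℝ => ((sSup ((fun t => f t c / c ^ b) '' Icc (0:ℝ) 1) : ℝ) : EReal))
    Filter.atTop


/-! ### The integrands of `T_{k,f}` -/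

/-- Membership in the cone of nonnegative continuous functions on `[0,1]`. -/
def NonnegCont (v : ℝ → ℝ) : Prop :=
  ContinuousOn v (Icc (0:ℝ) 1) ∧ ∀ t ∈ Icc (0:ℝ) 1, 0 ≤ v t

/-- The inner integral of `T_{k,f}(v)` at `τ`, with `g` in the role of `s ↦ f(s, v(s))`. -/
noncomputable def innerInt (N k : ℕ) (g : ℝ → ℝ) (τ : ℝ) : ℝ :=
  ∫ s in (0:ℝ)..τ, s ^ (N - 1) / ((N - 1).choose (k - 1)) * g s

/-- The integrand in `τ` of `T_{k,f}(v)`, with `g` in the role of `s ↦ f(s, v(s))`. -/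
noncomputable def outerFun (N k : ℕ) (g : ℝ → ℝ) (τ : ℝ) : ℝ :=
  (((k : ℝ) / τ ^ (N - k)) * innerInt N k g τ) ^ ((1 : ℝ) / (k : ℝ))

lemma thess_eq (N k : ℕ) (f : ℝ → ℝ → ℝ) (v : ℝ → ℝ) (t : ℝ) :
    Thess N k f v t = ∫ τ in t..1, outerFun N k (fun s => f s (v s)) τ := rfl

lemma nonnegCont_comp {f : ℝ → ℝ → ℝ}
    (hfc : ContinuousOn (fun p : ℝ × ℝ => f p.1 p.2) (Icc (0:ℝ) 1 ×ˢ Ici (0:ℝ)))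
    (hfnn : ∀ t ∈ Icc (0:ℝ) 1, ∀ c ∈ Ici (0:ℝ), 0 ≤ f t c)
    {v : ℝ → ℝ} (hv : NonnegCont v) : NonnegCont (fun s => f s (v s)) := by
  refine ⟨?_, fun t ht => hfnn t ht _ (hv.2 t ht)⟩
  exact hfc.comp (f := fun s => (s, v s)) (continuousOn_id.prodMk hv.1)
    fun s hs => ⟨hs, hv.2 s hs⟩

section bounds

variable {N k : ℕ} (hk1 : 1 ≤ k) (hkN : k ≤ N) {g : ℝ → ℝ} (hg : NonnegCont g)

include hk1 hkN in
lemma one_le_choose' : (1:ℝ) ≤ ((N - 1).choose (k - 1) : ℝ) := by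
  exact_mod_cast Nat.choose_pos (show k - 1 ≤ N - 1 by omega)

include hg in
lemma kernel_continuousOn :
    ContinuousOn (fun s : ℝ => s ^ (N - 1) / ((N - 1).choose (k - 1) : ℝ) * g s)
      (Icc (0:ℝ) 1) :=
  ((continuous_id.pow _).div_const _).continuousOn.mul hg.1

include hg in
lemma kernel_nonneg {s : ℝ} (hs : s ∈ Icc (0:ℝ) 1) :
    0 ≤ s ^ (N - 1) / ((N - 1).choose (k - 1) : ℝ) * g s :=
  mul_nonneg (div_nonneg (pow_nonneg hs.1 _) (Nat.cast_nonneg _)) (hg.2 s hs)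

include hg in
lemma kernel_intervalIntegrable {a b : ℝ} (ha : 0 ≤ a) (hab : a ≤ b) (hb : b ≤ 1) :
    IntervalIntegrable (fun s : ℝ => s ^ (N - 1) / ((N - 1).choose (k - 1) : ℝ) * g s)
      volume a b := by
  apply ContinuousOn.intervalIntegrable_of_Icc hab
  exact (kernel_continuousOn hg).mono (Icc_subset_Icc ha hb)

include hg in
lemma innerInt_nonneg {τ : ℝ} (hτ : τ ∈ Icc (0:ℝ) 1) : 0 ≤ innerInt N k g τ :=
  intervalIntegral.integral_nonneg hτ.1 fun _ hs =>
    kernel_nonneg hg ⟨hs.1, hs.2.trans hτ.2⟩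

include hg in
lemma outerFun_nonneg {τ : ℝ} (hτ : τ ∈ Icc (0:ℝ) 1) : 0 ≤ outerFun N k g τ :=
  Real.rpow_nonneg (mul_nonneg (div_nonneg (Nat.cast_nonneg _) (pow_nonneg hτ.1 _))
    (innerInt_nonneg hg hτ)) _

include hk1 hkN hg in
lemma innerInt_le {M : ℝ} (hM : ∀ s ∈ Icc (0:ℝ) 1, g s ≤ M) {τ : ℝ} (hτ : τ ∈ Icc (0:ℝ) 1) :
    innerInt N k g τ ≤ τ ^ N * M := by
  have hC := one_le_choose' hk1 hkN
  have h : innerInt N k g τ ≤ ∫ _ in (0:ℝ)..τ, τ ^ (N - 1) * M := by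
    apply intervalIntegral.integral_mono_on hτ.1
      (kernel_intervalIntegrable hg le_rfl hτ.1 hτ.2) (by simp)
    intro s hs
    have hs1 : s ∈ Icc (0:ℝ) 1 := ⟨hs.1, hs.2.trans hτ.2⟩
    refine mul_le_mul ?_ (hM s hs1) (hg.2 s hs1) (pow_nonneg hτ.1 _)
    exact (div_le_self (pow_nonneg hs.1 _) hC).trans (pow_le_pow_left₀ hs.1 hs.2 _)
  refine h.trans (le_of_eq ?_)
  rw [intervalIntegral.integral_const, smul_eq_mul, sub_zero, ← mul_assoc, ← pow_succ',
    Nat.sub_add_cancel (by omega)]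

include hk1 hkN hg in
/-- The singular factor `τ ^ (k - N)` is absorbed by the factor `τ ^ N` of `innerInt_le`, since
`k ≥ 1`. -/
lemma outerFun_le {M : ℝ} (hM : ∀ s ∈ Icc (0:ℝ) 1, g s ≤ M) {τ : ℝ} (hτ : τ ∈ Ioc (0:ℝ) 1) :
    outerFun N k g τ ≤ (k * M) ^ ((1 : ℝ) / (k : ℝ)) := by
  have hτ' : τ ∈ Icc (0:ℝ) 1 := ⟨hτ.1.le, hτ.2⟩
  have hM0 : 0 ≤ M := (hg.2 τ hτ').trans (hM τ hτ')
  have hp : 0 < τ ^ (N - k) := pow_pos hτ.1 _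
  refine Real.rpow_le_rpow (mul_nonneg (by positivity) (innerInt_nonneg hg hτ')) ?_
    (by positivity)
  calc (k:ℝ) / τ ^ (N - k) * innerInt N k g τ
      ≤ (k:ℝ) / τ ^ (N - k) * (τ ^ N * M) := by
        gcongr
        exact innerInt_le hk1 hkN hg hM hτ'
    _ = τ ^ k * (k * M) := by
        have : τ ^ N = τ ^ (N - k) * τ ^ k := by rw [← pow_add, Nat.sub_add_cancel hkN]
        rw [this]; field_simp
    _ ≤ 1 * (k * M) := by
        gcongr
        exact pow_le_one₀ hτ.1.le hτ.2
    _ = k * M := one_mul _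

include hg in
lemma outerFun_continuousOn : ContinuousOn (outerFun N k g) (Ioc (0:ℝ) 1) := by
  have hI : ContinuousOn (innerInt N k g) (Icc (0:ℝ) 1) := by
    have := intervalIntegral.continuousOn_primitive_interval
      (μ := volume) (a := (0:ℝ)) (b := 1)
      (f := fun s : ℝ => s ^ (N - 1) / ((N - 1).choose (k - 1) : ℝ) * g s)
      (by rw [uIcc_of_le zero_le_one]; exact (kernel_continuousOn hg).integrableOn_Icc)
    rwa [uIcc_of_le zero_le_one] at this
  refine ContinuousOn.rpow_const ?_ fun τ _ => Or.inr (by positivity)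
  refine ContinuousOn.mul ?_ (hI.mono Ioc_subset_Icc_self)
  exact continuousOn_const.div (continuous_id.pow _).continuousOn
    fun τ hτ => pow_ne_zero _ hτ.1.ne'

include hk1 hkN hg in
lemma outerFun_integrableOn : IntegrableOn (outerFun N k g) (Icc (0:ℝ) 1) := by
  obtain ⟨M, hM⟩ := isCompact_Icc.bddAbove_image hg.1
  have hM' : ∀ s ∈ Icc (0:ℝ) 1, g s ≤ M := fun s hs => hM (mem_image_of_mem _ hs)
  rw [integrableOn_Icc_iff_integrableOn_Ioc]
  refine IntegrableOn.of_bound (C := (k * M) ^ ((1 : ℝ) / (k : ℝ))) (by simp)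
    ((outerFun_continuousOn hg).aestronglyMeasurable measurableSet_Ioc) ?_
  refine (ae_restrict_iff' measurableSet_Ioc).2 (Eventually.of_forall fun τ hτ => ?_)
  rw [Real.norm_of_nonneg (outerFun_nonneg hg ⟨hτ.1.le, hτ.2⟩)]
  exact outerFun_le hk1 hkN hg hM' hτ

include hk1 hkN hg in
lemma outerFun_intervalIntegrable {a b : ℝ} (ha : 0 ≤ a) (hab : a ≤ b) (hb : b ≤ 1) :
    IntervalIntegrable (outerFun N k g) volume a b := by
  rw [intervalIntegrable_iff_integrableOn_Icc_of_le hab]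
  exact (outerFun_integrableOn hk1 hkN hg).mono_set (Icc_subset_Icc ha hb)

include hk1 hkN hg in
lemma outerFun_lower {A : ℝ} (hA : 0 ≤ A) (h : ∀ s ∈ Icc (1/4:ℝ) (3/4), A ≤ g s)
    {τ : ℝ} (hτ : τ ∈ Icc (3/4:ℝ) 1) :
    ((1/2) * ((1/4:ℝ) ^ (N - 1) / ((N - 1).choose (k - 1) : ℝ) * A)) ^ ((1 : ℝ) / (k : ℝ))
      ≤ outerFun N k g τ := by
  have hC := one_le_choose' hk1 hkN
  have hτ0 : 0 < τ := lt_of_lt_of_le (by norm_num) hτ.1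
  have hk1' : (1:ℝ) ≤ k := by exact_mod_cast hk1
  have hfac : 1 ≤ (k:ℝ) / τ ^ (N - k) := by
    rw [le_div_iff₀ (pow_pos hτ0 _), one_mul]
    exact (pow_le_one₀ hτ0.le hτ.2).trans hk1'
  have hin : (1/2) * ((1/4:ℝ) ^ (N - 1) / ((N - 1).choose (k - 1) : ℝ) * A)
      ≤ innerInt N k g τ := by
    have h1 : (∫ s in (1/4:ℝ)..(3/4), s ^ (N - 1) / ((N - 1).choose (k - 1) : ℝ) * g s)
        ≤ innerInt N k g τ := by
      apply intervalIntegral.integral_mono_interval (by norm_num) (by norm_num) hτ.1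
      · refine (ae_restrict_iff' measurableSet_Ioc).2 (Eventually.of_forall fun s hs => ?_)
        exact kernel_nonneg hg ⟨hs.1.le, hs.2.trans hτ.2⟩
      · exact kernel_intervalIntegrable hg le_rfl hτ0.le hτ.2
    refine le_trans ?_ h1
    have h2 : (∫ _ in (1/4:ℝ)..(3/4), (1/4:ℝ) ^ (N - 1) / ((N - 1).choose (k - 1) : ℝ) * A)
        ≤ ∫ s in (1/4:ℝ)..(3/4), s ^ (N - 1) / ((N - 1).choose (k - 1) : ℝ) * g s := by
      apply intervalIntegral.integral_mono_on (by norm_num) (by simp)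
        (kernel_intervalIntegrable hg (by norm_num) (by norm_num) (by norm_num))
      intro s hs
      have hs0 : 0 ≤ s := le_trans (by norm_num) hs.1
      refine mul_le_mul ?_ (h s hs) hA (by positivity)
      gcongr
      exact hs.1
    refine le_trans (le_of_eq ?_) h2
    rw [intervalIntegral.integral_const, smul_eq_mul]
    norm_num
  refine Real.rpow_le_rpow (by positivity) ?_ (by positivity)
  have h0 := innerInt_nonneg (N := N) (k := k) hg ⟨hτ0.le, hτ.2⟩
  nlinarith

end bounds

/-! ### Smallness and power-law lower bounds for a single operator -/

section operator

variable {N k : ℕ} (hk1 : 1 ≤ k) (hkN : k ≤ N) {f : ℝ → ℝ → ℝ}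
    (hfc : ContinuousOn (fun p : ℝ × ℝ => f p.1 p.2) (Icc (0:ℝ) 1 ×ˢ Ici (0:ℝ)))
    (hfnn : ∀ t ∈ Icc (0:ℝ) 1, ∀ c ∈ Ici (0:ℝ), 0 ≤ f t c)

include hk1 hkN hfc hfnn in
lemma thess_nonnegCont {v : ℝ → ℝ} (hv : NonnegCont v) : NonnegCont (Thess N k f v) := by
  have hg := nonnegCont_comp hfc hfnn hv
  constructor
  · have h := intervalIntegral.continuousOn_primitive_interval_left
      (μ := volume) (a := (0:ℝ)) (b := 1) (f := outerFun N k fun s => f s (v s))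
      (by rw [uIcc_of_le zero_le_one]; exact outerFun_integrableOn hk1 hkN hg)
    rw [uIcc_of_le zero_le_one] at h
    exact h
  · intro t ht
    rw [thess_eq]
    exact intervalIntegral.integral_nonneg ht.2 fun τ hτ =>
      outerFun_nonneg hg ⟨ht.1.trans hτ.1, hτ.2⟩

include hfc in
/-- By compactness of `[0,1]`, the condition `f(t, 0) = 0` makes `f(t, c)` small uniformly in
`t` for small `c`. -/
lemma f_small (hf0 : ∀ t ∈ Icc (0:ℝ) 1, f t 0 = 0) {η : ℝ} (hη : 0 < η) :
    ∃ δ > 0, ∀ t ∈ Icc (0:ℝ) 1, ∀ c, 0 ≤ c → c ≤ δ → f t c ≤ η := by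
  have huc := (isCompact_Icc.prod isCompact_Icc).uniformContinuousOn_of_continuous
    (hfc.mono (prod_mono (Subset.refl (Icc (0:ℝ) 1)) (fun x hx => hx.1 : Icc (0:ℝ) 1 ⊆ Ici 0)))
  obtain ⟨δ, hδ, h⟩ := Metric.uniformContinuousOn_iff.1 huc η hη
  refine ⟨min (δ/2) 1, by positivity, fun t ht c hc hcδ => ?_⟩
  have := h (t, c) ⟨ht, hc, hcδ.trans (min_le_right _ _)⟩ (t, 0) ⟨ht, le_rfl, zero_le_one⟩ (by
    rw [Prod.dist_eq]
    simp only [dist_self, Real.dist_eq, sub_zero, abs_of_nonneg hc]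
    have := hcδ.trans (min_le_left _ _)
    exact max_lt hδ (by linarith))
  simp only [hf0 t ht, Real.dist_eq, sub_zero] at this
  exact (le_abs_self _).trans this.le

include hk1 hkN hfc hfnn in
lemma thess_small (hf0 : ∀ t ∈ Icc (0:ℝ) 1, f t 0 = 0) {ε : ℝ} (hε : 0 < ε) :
    ∃ δ > 0, ∀ v, NonnegCont v → (∀ t ∈ Icc (0:ℝ) 1, v t ≤ δ) →
      ∀ t ∈ Icc (0:ℝ) 1, Thess N k f v t ≤ ε := by
  have hk0 : (0:ℝ) < k := by exact_mod_cast hk1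
  -- `η` is chosen so that the bound `(k η) ^ (1 / k)` of `outerFun_le` equals `ε`.
  obtain ⟨δ, hδ, h⟩ := f_small hfc hf0 (η := ε ^ k / k) (by positivity)
  refine ⟨δ, hδ, fun v hv hvδ t ht => ?_⟩
  have hg := nonnegCont_comp hfc hfnn hv
  rw [thess_eq]
  have hb : (∫ τ in t..1, outerFun N k (fun s => f s (v s)) τ) ≤ ∫ _ in t..1, ε := by
    apply intervalIntegral.integral_mono_on_of_le_Ioo ht.2
      (outerFun_intervalIntegrable hk1 hkN hg ht.1 ht.2 le_rfl) (by simp)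
    intro τ hτ
    have h2 := outerFun_le hk1 hkN hg (M := ε ^ k / k)
      (fun s hs => h s hs _ (hv.2 s hs) (hvδ s hs)) ⟨ht.1.trans_lt hτ.1, hτ.2.le⟩
    rwa [mul_div_cancel₀ _ hk0.ne', one_div, Real.pow_rpow_inv_natCast hε.le (by omega)] at h2
  rw [intervalIntegral.integral_const, smul_eq_mul] at hb
  have := ht.1
  nlinarith

include hfnn in
lemma f_lower {a : ℝ} (h0 : 0 < fLow0 f a) :
    ∃ L > 0, ∃ δ > 0, ∀ t ∈ Icc (0:ℝ) 1, ∀ c, 0 < c → c ≤ δ → L * c ^ a ≤ f t c := by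
  obtain ⟨L, hL0, hL⟩ := EReal.lt_iff_exists_real_btwn.1 h0
  have hL0' : 0 < L := by exact_mod_cast hL0
  have hev := Filter.eventually_lt_of_lt_liminf hL
  obtain ⟨δ, hδ, hsub⟩ := mem_nhdsGT_iff_exists_Ioc_subset.1 hev
  refine ⟨L, hL0', δ, hδ, fun t ht c hc hcδ => ?_⟩
  have h1 : L < sInf ((fun t => f t c / c ^ a) '' Icc (0:ℝ) 1) := by
    exact_mod_cast hsub ⟨hc, hcδ⟩
  have hbdd : BddBelow ((fun t => f t c / c ^ a) '' Icc (0:ℝ) 1) := by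
    refine ⟨0, ?_⟩
    rintro _ ⟨s, hs, rfl⟩
    exact div_nonneg (hfnn s hs c hc.le) (Real.rpow_nonneg hc.le _)
  have h2 := h1.le.trans (csInf_le hbdd (mem_image_of_mem _ ht))
  exact (le_div_iff₀ (Real.rpow_pos_of_pos hc _)).1 h2

include hk1 hkN hfc hfnn in
lemma thess_lower {a : ℝ} (ha : 0 < a) (h0 : 0 < fLow0 f a) :
    ∃ D > 0, ∃ δ > 0, ∀ v, NonnegCont v → (∀ t ∈ Icc (0:ℝ) 1, v t ≤ δ) →
      ∀ m > 0, (∀ t ∈ Icc (1/4:ℝ) (3/4), m ≤ v t) →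
      ∀ t ∈ Icc (1/4:ℝ) (3/4), D * m ^ (a / k) ≤ Thess N k f v t := by
  obtain ⟨L, hL, δ, hδ, h⟩ := f_lower hfnn h0
  have hC := one_le_choose' hk1 hkN
  set c : ℝ := (1/2) * ((1/4:ℝ) ^ (N - 1) / ((N - 1).choose (k - 1) : ℝ) * L) with hc
  have hc0 : 0 < c := by positivity
  refine ⟨1/4 * c ^ ((1:ℝ) / k), by positivity, δ, hδ, fun v hv hvδ m hm hmv t ht => ?_⟩
  have hg := nonnegCont_comp hfc hfnn hv
  have hA : ∀ s ∈ Icc (1/4:ℝ) (3/4), L * m ^ a ≤ f s (v s) := by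
    intro s hs
    have hs1 : s ∈ Icc (0:ℝ) 1 := ⟨by linarith [hs.1], by linarith [hs.2]⟩
    refine le_trans ?_ (h s hs1 (v s) (hm.trans_le (hmv s hs)) (hvδ s hs1))
    have := hmv s hs
    gcongr
  rw [thess_eq]
  have ht0 : 0 ≤ t := by linarith [ht.1]
  have h1 : (∫ τ in (3/4:ℝ)..1, outerFun N k (fun s => f s (v s)) τ)
      ≤ ∫ τ in t..1, outerFun N k (fun s => f s (v s)) τ := by
    apply intervalIntegral.integral_mono_interval ht.2 (by norm_num) le_rfl
    · refine (ae_restrict_iff' measurableSet_Ioc).2 (Eventually.of_forall fun s hs => ?_)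
      exact outerFun_nonneg hg ⟨ht0.trans hs.1.le, hs.2⟩
    · exact outerFun_intervalIntegrable hk1 hkN hg ht0 (by linarith [ht.2]) le_rfl
  have h2 : (∫ _ in (3/4:ℝ)..1, c ^ ((1:ℝ) / k) * m ^ (a / k))
      ≤ ∫ τ in (3/4:ℝ)..1, outerFun N k (fun s => f s (v s)) τ := by
    apply intervalIntegral.integral_mono_on (by norm_num) (by simp)
      (outerFun_intervalIntegrable hk1 hkN hg (by norm_num) (by norm_num) le_rfl)
    intro τ hτ
    refine le_trans (le_of_eq ?_)
      (outerFun_lower hk1 hkN hg (A := L * m ^ a) (by positivity) hA hτ)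
    rw [div_eq_mul_one_div a, Real.rpow_mul hm.le, ← Real.mul_rpow hc0.le (by positivity), hc]
    congr 1
    ring
  refine le_trans (le_of_eq ?_) (h2.trans h1)
  rw [intervalIntegral.integral_const, smul_eq_mul]
  ring

end operator

/-! ### The composite operator -/

lemma compT_succ (N : ℕ) {n : ℕ} (k : Fin (n+1) → ℕ) (f : Fin (n+1) → ℝ → ℝ → ℝ) (v : ℝ → ℝ) :
    compT N k f v =
      Thess N (k 0) (f 0) (compT N (fun i => k i.succ) (fun i => f i.succ) v) := by
  simp [compT, List.ofFn_succ]

lemma lower_chain {D₀ D₁ m p q : ℝ} (hD₁ : 0 < D₁) (hm : 0 < m) :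
    D₀ * D₁ ^ p * m ^ (p * q) = D₀ * (D₁ * m ^ q) ^ p := by
  rw [Real.mul_rpow hD₁.le (by positivity), ← Real.rpow_mul hm.le, mul_comm q p, mul_assoc]

/-- When every `f_i` vanishes at `c = 0`, the composite sends small functions to small functions
and obeys a power-law lower bound on `[1/4, 3/4]` with exponent `∏ α_i / k_i`. -/
lemma compT_bounds (N : ℕ) : ∀ (n : ℕ) (k : Fin n → ℕ) (_ : ∀ i, 1 ≤ k i ∧ k i ≤ N)
    (f : Fin n → ℝ → ℝ → ℝ)
    (_ : ∀ i, ContinuousOn (fun p : ℝ × ℝ => f i p.1 p.2) (Icc (0:ℝ) 1 ×ˢ Ici (0:ℝ)))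
    (_ : ∀ i, ∀ t ∈ Icc (0:ℝ) 1, ∀ c ∈ Ici (0:ℝ), 0 ≤ f i t c)
    (α : Fin n → ℝ) (_ : ∀ i, 0 < α i) (_ : ∀ i, 0 < fLow0 (f i) (α i))
    (_ : ∀ i, ∀ t ∈ Icc (0:ℝ) 1, f i t 0 = 0) (ε : ℝ) (_ : 0 < ε),
    ∃ D > 0, ∃ δ > 0, ∀ v, NonnegCont v → (∀ t ∈ Icc (0:ℝ) 1, v t ≤ δ) →
      ∀ m > 0, (∀ t ∈ Icc (1/4:ℝ) (3/4), m ≤ v t) →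
      NonnegCont (compT N k f v) ∧ (∀ t ∈ Icc (0:ℝ) 1, compT N k f v t ≤ ε) ∧
      ∀ t ∈ Icc (1/4:ℝ) (3/4), D * m ^ (∏ i, α i / k i) ≤ compT N k f v t := by
  intro n
  induction n with
  | zero =>
    intro k _ f _ _ α _ _ _ ε hε
    refine ⟨1, one_pos, ε, hε, fun v hv hvε m _ hmv => ?_⟩
    have hid : compT N k f v = v := by simp [compT]
    rw [hid]
    exact ⟨hv, hvε, by simpa using hmv⟩
  | succ n ih =>
    intro k hk f hfc hfnn α hα h0 hf0 ε hε
    obtain ⟨δ₁, hδ₁, hsmall⟩ :=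
      thess_small (hk 0).1 (hk 0).2 (hfc 0) (hfnn 0) (hf0 0) hε
    obtain ⟨D₀, hD₀, δ₀, hδ₀, hlow⟩ :=
      thess_lower (hk 0).1 (hk 0).2 (hfc 0) (hfnn 0) (hα 0) (h0 0)
    obtain ⟨D₁, hD₁, δ, hδ, hrec⟩ := ih (fun i => k i.succ) (fun i => hk i.succ)
      (fun i => f i.succ) (fun i => hfc i.succ) (fun i => hfnn i.succ) (fun i => α i.succ)
      (fun i => hα i.succ) (fun i => h0 i.succ) (fun i => hf0 i.succ) (min δ₁ δ₀)
      (lt_min hδ₁ hδ₀)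
    refine ⟨D₀ * D₁ ^ (α 0 / k 0), by positivity, δ, hδ, fun v hv hvδ m hm hmv => ?_⟩
    obtain ⟨hw, hwε, hwm⟩ := hrec v hv hvδ m hm hmv
    rw [compT_succ]
    refine ⟨thess_nonnegCont (hk 0).1 (hk 0).2 (hfc 0) (hfnn 0) hw,
      hsmall _ hw fun t ht => (hwε t ht).trans (min_le_left _ _), fun t ht => ?_⟩
    rw [Fin.prod_univ_succ, lower_chain hD₁ hm]
    exact hlow _ hw (fun t ht => (hwε t ht).trans (min_le_right _ _)) _ (by positivity) hwm t ht

lemma le_supNorm {v : ℝ → ℝ} (hv : ContinuousOn v (Icc (0:ℝ) 1)) {t : ℝ}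
    (ht : t ∈ Icc (0:ℝ) 1) : v t ≤ supNorm v :=
  (le_abs_self _).trans
    (le_csSup (isCompact_Icc.bddAbove_image hv.abs) (mem_image_of_mem (fun t => |v t|) ht))

/-- A positive multiple of a sublinear power dominates `4 x` for small `x > 0`. -/
lemma exists_small {D δ β : ℝ} (hD : 0 < D) (hδ : 0 < δ) (hβ : β < 1) :
    ∃ x > 0, 4 * x ≤ δ ∧ 4 * x < D * x ^ β := by
  have h1 : Tendsto (fun x : ℝ => x ^ (1 - β)) (nhdsWithin 0 (Ioi 0)) (nhds 0) := by
    have := (Real.continuousAt_rpow_const 0 (1 - β) (Or.inr (by linarith))).tendsto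
    rw [Real.zero_rpow (by linarith)] at this
    exact this.mono_left nhdsWithin_le_nhds
  have h2 : ∀ᶠ x : ℝ in nhdsWithin 0 (Ioi 0), x ^ (1 - β) < D / 4 :=
    h1.eventually (gt_mem_nhds (by positivity))
  have h3 : ∀ᶠ x : ℝ in nhdsWithin 0 (Ioi 0), x < δ / 4 :=
    nhdsWithin_le_nhds (gt_mem_nhds (by positivity))
  obtain ⟨x, hx2, hx3, hx⟩ := (h2.and (h3.and self_mem_nhdsWithin)).exists
  have hx : 0 < x := hx
  refine ⟨x, hx, by linarith, ?_⟩
  have hsplit : x ^ (1 - β) * x ^ β = x := by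
    rw [← Real.rpow_add hx, sub_add_cancel, Real.rpow_one]
  have hpos : 0 < x ^ β := Real.rpow_pos_of_pos hx _
  have := mul_lt_mul_of_pos_right hx2 hpos
  linarith

theorem stmt_12 (N n : ℕ) (hN : 2 ≤ N) (hn : 2 ≤ n)
    (k : Fin n → ℕ) (hk : ∀ i, 1 ≤ k i ∧ k i ≤ N)
    (f : Fin n → ℝ → ℝ → ℝ)
    (hfc : ∀ i, ContinuousOn (fun p : ℝ × ℝ => f i p.1 p.2) (Icc (0:ℝ) 1 ×ˢ Ici (0:ℝ)))
    (hfnn : ∀ i, ∀ t ∈ Icc (0:ℝ) 1, ∀ c ∈ Ici (0:ℝ), 0 ≤ f i t c)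
    (hfne : ∀ i, ∃ t ∈ Icc (0:ℝ) 1, ∃ c ∈ Ici (0:ℝ), f i t c ≠ 0)
    (α : Fin n → ℝ) (hα : ∀ i, 0 < α i)
    (h0 : ∀ i, 0 < fLow0 (f i) (α i) ∧ fLow0 (f i) (α i) < ⊤)
    (hf0 : ∀ i : Fin n, (i : ℕ) ≠ 0 → ∀ t ∈ Icc (0:ℝ) 1, f i t 0 = 0)
    (hαk : ∏ i, α i < ∏ i, (k i : ℝ)) :
    ∃ r > (0:ℝ), ∀ v : ℝ → ℝ, inK v → supNorm v = r →
      supNorm v < supNorm (compT N k f v) := by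
  obtain ⟨n, rfl⟩ : ∃ n', n = n' + 1 := ⟨n - 1, by omega⟩
  obtain ⟨D₀, hD₀, δ₀, hδ₀, hlow⟩ :=
    thess_lower (hk 0).1 (hk 0).2 (hfc 0) (hfnn 0) (hα 0) (h0 0).1
  obtain ⟨D₁, hD₁, δ, hδ, hrec⟩ := compT_bounds N n (fun i => k i.succ) (fun i => hk i.succ)
    (fun i => f i.succ) (fun i => hfc i.succ) (fun i => hfnn i.succ) (fun i => α i.succ)
    (fun i => hα i.succ) (fun i => (h0 i.succ).1) (fun i => hf0 i.succ (by simp)) δ₀ hδ₀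
  have hβ : ∏ i, α i / (k i : ℝ) < 1 := by
    rw [Finset.prod_div_distrib, div_lt_one]
    · exact hαk
    · exact Finset.prod_pos fun i _ => by exact_mod_cast (hk i).1
  obtain ⟨x, hx, hxδ, hxD⟩ :=
    exists_small (D := D₀ * D₁ ^ (α 0 / k 0)) (by positivity) hδ hβ
  refine ⟨4 * x, by positivity, fun v hv hvr => ?_⟩
  have hvc : NonnegCont v := ⟨hv.1, hv.2.1⟩
  have hvx : ∀ t ∈ Icc (1/4:ℝ) (3/4), x ≤ v t := fun t ht => by
    have := hv.2.2 t ht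
    rw [hvr] at this
    linarith
  obtain ⟨hw, hwε, hwm⟩ := hrec v hvc
    (fun t ht => ((le_supNorm hv.1 ht).trans_eq hvr).trans hxδ) x hx hvx
  have hfin := hlow _ hw hwε _ (by positivity) hwm (1/4) ⟨le_rfl, by norm_num⟩
  rw [← lower_chain hD₁ hx, ← Fin.prod_univ_succ (fun i => α i / (k i : ℝ))] at hfin
  rw [compT_succ, hvr]
  exact hxD.trans_le (hfin.trans (le_supNorm
    (thess_nonnegCont (hk 0).1 (hk 0).2 (hfc 0) (hfnn 0) hw).1 ⟨by norm_num, by norm_num⟩))
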